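/- Spatial weak BV estimate: in the discrete upwind setting with N time steps, let q ∈ (1,∞), κ > 1, δ > 0, h > 0, U > 0, set T := Nδ, λⁿ := δ · max_K ((div uⁿ)_K)⁻ and Λ := exp(Σ_n λⁿ). Assume ((q−1)/q) λⁿ ≤ (κ−1)/κ for every n, that |uⁿ_{KL}| ≤ U for all n, K, L, and the mesh regularity bound Σ_{L≠K} |K∣L| ≤ C₀ |K|/h for all K ∈ 𝒯 with some C₀ > 0. Let ρ⁰, f⁰,…,f^{N−1} ∈ ℝ^𝒯 be arbitrary and let ρⁿ⁺¹ solve one step of the implicit upwind scheme with data ρⁿ, fⁿ, fluxes uⁿ and time step δ for each n. Then there exists a constant C, depending only on q, κ, Λ, C₀, Σ_K |K|, ‖ρ⁰‖_{ℓ^q} and Σ_n δ‖fⁿ‖_{ℓ^q}, such that δ Σ_{n=0}^{N−1} Σ_K Σ_{L≠K} |K∣L| |uⁿ_{KL}| |ρⁿ⁺¹_K − ρⁿ⁺¹_L| ≤ C √(T U / h). -/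

import Mathlib

open Finset

/-!
Write `a_{KL} = |K∣L| u⁺_{KL}` for the outflow rate from `K` to `L`, so that one step of the scheme
reads `|K| (r_K - s_K) + δ ∑ L, (a_{KL} r_K - a_{LK} r_L) = δ |K| f_K`. Testing it against
`φ(r_K) = p |r_K|^{p-2} r_K`, a discrete summation by parts produces, besides a divergence term, the
numerical dissipation `∑ a_{KL} D(r_K, r_L)`, where `D` is the Bregman divergence of `|·|^p`.

For `p = q`, dropping the nonnegative dissipation and applying Hölder gives `ℓ^q` stability, hence
`ℓ^p` stability for all `p ≤ q` as the domain has finite volume. For `p = min q 2`, keeping the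
dissipation gives a bound on its total over space and time. Since `p ≤ 2`, the Bregman divergence
controls `(a - b)²` up to the weight `(|a| + |b|)^{2-p}`, and Cauchy–Schwarz, with the mesh
regularity bounding the total flow through each cell by `C₀ U |K| / h`, yields the `√(T U / h)`.
-/

section RealInequalities

lemma mul_sub_le_sub_of_convexOn {s : Set ℝ} {f : ℝ → ℝ} {f' x y : ℝ} (hf : ConvexOn ℝ s f)
    (hx : x ∈ s) (hy : y ∈ s) (hf' : HasDerivAt f f' x) : f' * (y - x) ≤ f y - f x := by
  rcases lt_trichotomy x y with hxy | rfl | hyx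
  · have hslope := hf.le_slope_of_hasDerivAt hx hy hxy hf'
    rwa [slope_def_field, le_div_iff₀ (sub_pos.2 hxy)] at hslope
  · simp
  · have hslope := hf.slope_le_of_hasDerivAt hy hx hyx hf'
    rw [slope_def_field, div_le_iff₀ (sub_pos.2 hyx)] at hslope
    linarith

lemma rpow_sub_one_mul_self {p x : ℝ} (hp : p ≠ 0) (hx : 0 ≤ x) : x ^ (p - 1) * x = x ^ p := by
  rw [← Real.rpow_add_one' hx (by simpa using hp), sub_add_cancel]

lemma mul_mul_rpow_sub_one_le {p x y : ℝ} (hp : 1 < p) (hx : 0 ≤ x) (hy : 0 ≤ y) :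
    p * (x * y ^ (p - 1)) ≤ x ^ p + (p - 1) * y ^ p := by
  have : 0 < p := by linarith
  have hp1 : 0 < p - 1 := by linarith
  have hyoung := Real.young_inequality_of_nonneg hx (Real.rpow_nonneg hy (p - 1))
    (Real.HolderConjugate.conjExponent hp)
  rw [← Real.rpow_mul hy, Real.conjExponent, mul_div_cancel₀ _ hp1.ne'] at hyoung
  calc p * (x * y ^ (p - 1)) ≤ p * (x ^ p / p + y ^ p / (p / (p - 1))) := by gcongr
    _ = x ^ p + (p - 1) * y ^ p := by field_simp

lemma one_le_exp_mul_one_sub {κ x : ℝ} (hκ : 0 < κ) (hx : 0 ≤ x) (hxκ : x ≤ (κ - 1) / κ) :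
    1 ≤ Real.exp (κ * x) * (1 - x) := by
  rw [le_div_iff₀ hκ] at hxκ
  have hx1 : 0 ≤ 1 - x := by nlinarith
  calc 1 ≤ (κ * x + 1) * (1 - x) := by nlinarith
    _ ≤ Real.exp (κ * x) * (1 - x) := by gcongr; exact Real.add_one_le_exp _

lemma le_exp_sum_mul_add_sum {x y c : ℕ → ℝ} {N : ℕ} (hc : ∀ n, 0 ≤ c n) (hy : ∀ n, 0 ≤ y n)
    (hstep : ∀ n < N, x (n + 1) ≤ Real.exp (c n) * (x n + y n)) :
    ∀ n ≤ N, x n ≤ Real.exp (∑ m ∈ range n, c m) * (x 0 + ∑ m ∈ range n, y m) := by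
  intro n hn
  induction n with
  | zero => simp
  | succ n ih =>
    have hexp : 1 ≤ Real.exp (∑ m ∈ range n, c m) :=
      Real.one_le_exp (sum_nonneg fun m _ ↦ hc m)
    calc x (n + 1) ≤ Real.exp (c n) * (x n + y n) := hstep n hn
      _ ≤ Real.exp (c n) * (Real.exp (∑ m ∈ range n, c m) * (x 0 + ∑ m ∈ range n, y m)
            + Real.exp (∑ m ∈ range n, c m) * y n) := by
        gcongr
        · exact ih (by omega)
        · exact le_mul_of_one_le_left (hy n) hexp
      _ = _ := by
        rw [sum_range_succ, sum_range_succ, Real.exp_add]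
        ring

end RealInequalities

section BregmanDivergence

variable {p : ℝ}

/-- The duality map `x ↦ |x|^{p-2} x` of the `ℓ^p` spaces, that is, `1 / p` times the derivative of
`|x|^p`. For `p < 2` the value at `0` is still `0`, thanks to the factor `x`. -/
noncomputable def dualityMap (p x : ℝ) : ℝ := |x| ^ (p - 2) * x

/-- The Bregman divergence `φ(a) - φ(b) - φ'(b) (a - b)` of `φ(x) = |x|^p`, which measures the
numerical dissipation of the upwind flux between two cells with values `a` and `b`. -/
noncomputable def powBregman (p a b : ℝ) : ℝ :=
  |a| ^ p - |b| ^ p - p * dualityMap p b * (a - b)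

lemma dualityMap_neg (p x : ℝ) : dualityMap p (-x) = -dualityMap p x := by
  simp [dualityMap]

lemma abs_dualityMap (hp : p ≠ 1) (x : ℝ) : |dualityMap p x| = |x| ^ (p - 1) := by
  have hp1 : p - 2 + 1 ≠ 0 := by contrapose! hp; linarith
  rw [dualityMap, abs_mul, abs_of_nonneg (by positivity), ← Real.rpow_add_one' (abs_nonneg x) hp1]
  ring_nf

lemma dualityMap_of_nonneg (hp : p ≠ 1) {x : ℝ} (hx : 0 ≤ x) : dualityMap p x = x ^ (p - 1) := by
  have hnonneg : 0 ≤ dualityMap p x := mul_nonneg (by positivity) hx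
  rw [← abs_of_nonneg hnonneg, abs_dualityMap hp, abs_of_nonneg hx]

lemma dualityMap_mul_self (hp : p ≠ 0) (x : ℝ) : dualityMap p x * x = |x| ^ p := by
  have hp2 : p - 2 + (2 : ℕ) ≠ 0 := by simpa using hp
  rw [dualityMap, mul_assoc, ← sq, ← sq_abs, ← Real.rpow_add_natCast' (abs_nonneg x) hp2]
  simp

lemma powBregman_eq (hp : p ≠ 0) (a b : ℝ) :
    powBregman p a b = |a| ^ p + (p - 1) * |b| ^ p - p * (a * dualityMap p b) := by
  rw [powBregman]
  linear_combination p * dualityMap_mul_self hp b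

lemma mul_dualityMap_sub_mul (hp : p ≠ 0) (a b : ℝ) :
    p * (dualityMap p a - dualityMap p b) * a =
      powBregman p a b + (p - 1) * (|a| ^ p - |b| ^ p) := by
  rw [powBregman_eq hp]
  linear_combination p * dualityMap_mul_self hp a

lemma powBregman_nonneg (hp : 1 < p) (a b : ℝ) : 0 ≤ powBregman p a b := by
  rw [powBregman_eq (by linarith), sub_nonneg]
  calc p * (a * dualityMap p b) ≤ p * (|a| * |b| ^ (p - 1)) := by
        rw [← abs_dualityMap hp.ne', ← abs_mul]
        gcongr
        exact le_abs_self _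
    _ ≤ |a| ^ p + (p - 1) * |b| ^ p := mul_mul_rpow_sub_one_le hp (abs_nonneg a) (abs_nonneg b)

lemma monotoneOn_rpow_sub_mul (hp : 1 < p) (hp2 : p ≤ 2) (R : ℝ) :
    MonotoneOn (fun x ↦ x ^ (p - 1) - (p - 1) * R ^ (p - 2) * x) (Set.Icc 0 R) := by
  have hderiv : ∀ x : ℝ, 0 < x → HasDerivAt (fun x ↦ x ^ (p - 1) - (p - 1) * R ^ (p - 2) * x)
      ((p - 1) * x ^ (p - 2) - (p - 1) * R ^ (p - 2)) x := fun x hx ↦ by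
    have hsub := (Real.hasDerivAt_rpow_const (p := p - 1) (Or.inl hx.ne')).sub
      ((hasDerivAt_id' x).const_mul ((p - 1) * R ^ (p - 2)))
    rwa [mul_one, show p - 1 - 1 = p - 2 by ring] at hsub
  refine monotoneOn_of_deriv_nonneg (convex_Icc 0 R) (Continuous.continuousOn ?_) ?_ ?_
  · exact (Real.continuous_rpow_const (by linarith)).sub (by fun_prop)
  all_goals
    intro x hx
    rw [interior_Icc] at hx
  · exact (hderiv x hx.1).differentiableAt.differentiableWithinAt
  · rw [(hderiv x hx.1).deriv, ← mul_sub]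
    exact mul_nonneg (by linarith)
      (sub_nonneg.2 (Real.rpow_le_rpow_of_nonpos hx.1 hx.2.le (by linarith)))

lemma monotoneOn_dualityMap_sub_mul (hp : 1 < p) (hp2 : p ≤ 2) {R : ℝ} (hR : 0 ≤ R) :
    MonotoneOn (fun x ↦ dualityMap p x - (p - 1) * R ^ (p - 2) * x) (Set.Icc (-R) R) := by
  have hright : MonotoneOn (fun x ↦ dualityMap p x - (p - 1) * R ^ (p - 2) * x) (Set.Icc 0 R) :=
    (monotoneOn_rpow_sub_mul hp hp2 R).congr fun x hx ↦ by
      simp only [dualityMap_of_nonneg hp.ne' hx.1]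
  have hleft : MonotoneOn (fun x ↦ dualityMap p x - (p - 1) * R ^ (p - 2) * x)
      (Set.Icc (-R) 0) := fun x hx y hy hxy ↦ by
    have hneg := hright ⟨neg_nonneg.2 hy.2, neg_le.1 hy.1⟩ ⟨neg_nonneg.2 hx.2, neg_le.1 hx.1⟩
      (neg_le_neg hxy)
    simp only [dualityMap_neg] at hneg
    linarith
  rw [← Set.Icc_union_Icc_eq_Icc (neg_nonpos.2 hR) hR]
  exact hleft.union_right hright (isGreatest_Icc (neg_nonpos.2 hR)) (isLeast_Icc hR)

lemma hasDerivAt_abs_rpow_sub_mul_sq (hp : 1 < p) (R x : ℝ) :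
    HasDerivAt (fun x ↦ |x| ^ p - p * (p - 1) / 2 * R ^ (p - 2) * x ^ 2)
      (p * (dualityMap p x - (p - 1) * R ^ (p - 2) * x)) x :=
  ((hasDerivAt_abs_rpow x hp).sub
    ((hasDerivAt_pow 2 x).const_mul (p * (p - 1) / 2 * R ^ (p - 2)))).congr_deriv <| by
      rw [dualityMap]
      push_cast
      ring

lemma convexOn_abs_rpow_sub_mul_sq (hp : 1 < p) (hp2 : p ≤ 2) {R : ℝ} (hR : 0 ≤ R) :
    ConvexOn ℝ (Set.Icc (-R) R) (fun x ↦ |x| ^ p - p * (p - 1) / 2 * R ^ (p - 2) * x ^ 2) := by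
  have hderiv := hasDerivAt_abs_rpow_sub_mul_sq hp R
  refine MonotoneOn.convexOn_of_deriv (convex_Icc (-R) R)
    (fun x _ ↦ (hderiv x).continuousAt.continuousWithinAt)
    (fun x _ ↦ (hderiv x).differentiableAt.differentiableWithinAt) fun x hx y hy hxy ↦ ?_
  rw [(hderiv x).deriv, (hderiv y).deriv]
  exact mul_le_mul_of_nonneg_left (monotoneOn_dualityMap_sub_mul hp hp2 hR (interior_subset hx)
    (interior_subset hy) hxy) (by linarith)

lemma mul_sq_sub_le_powBregman (hp : 1 < p) (hp2 : p ≤ 2) (a b : ℝ) :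
    p * (p - 1) / 2 * (|a| + |b|) ^ (p - 2) * (a - b) ^ 2 ≤ powBregman p a b := by
  have hR : 0 ≤ |a| + |b| := by positivity
  have ha : a ∈ Set.Icc (-(|a| + |b|)) (|a| + |b|) :=
    abs_le.1 (le_add_of_nonneg_right (abs_nonneg b))
  have hb : b ∈ Set.Icc (-(|a| + |b|)) (|a| + |b|) :=
    abs_le.1 (le_add_of_nonneg_left (abs_nonneg a))
  have htangent := mul_sub_le_sub_of_convexOn (convexOn_abs_rpow_sub_mul_sq hp hp2 hR) hb ha
    (hasDerivAt_abs_rpow_sub_mul_sq hp _ b)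
  rw [powBregman]
  linear_combination htangent

lemma sq_sub_le_powBregman_mul (hp : 1 < p) (hp2 : p ≤ 2) (a b : ℝ) :
    (a - b) ^ 2 ≤ powBregman p a b * (2 / (p * (p - 1)) * (|a| + |b|) ^ (2 - p)) := by
  have : 0 < p := by linarith
  have hp1 : 0 < p - 1 := by linarith
  rcases (add_nonneg (abs_nonneg a) (abs_nonneg b)).eq_or_lt with hR | hR
  · obtain ⟨rfl, rfl⟩ : a = 0 ∧ b = 0 := by
      simpa using (add_eq_zero_iff_of_nonneg (abs_nonneg a) (abs_nonneg b)).1 hR.symm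
    simpa using mul_nonneg (powBregman_nonneg hp 0 0) (by positivity)
  · have hcancel : (|a| + |b|) ^ (p - 2) * (|a| + |b|) ^ (2 - p) = 1 := by
      rw [← Real.rpow_add hR]
      simp
    calc (a - b) ^ 2
        = p * (p - 1) / 2 * (|a| + |b|) ^ (p - 2) * (a - b) ^ 2
            * (2 / (p * (p - 1)) * (|a| + |b|) ^ (2 - p)) := by
          field_simp
          linear_combination -(a - b) ^ 2 * hcancel
      _ ≤ _ := by
          gcongr
          exact mul_sq_sub_le_powBregman hp hp2 a b

lemma rpow_two_sub_le_one_add_rpow (hp : 1 ≤ p) (hp2 : p ≤ 2) {x : ℝ} (hx : 0 ≤ x) :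
    x ^ (2 - p) ≤ 1 + x ^ p := by
  have hxp : 0 ≤ x ^ p := Real.rpow_nonneg hx p
  rcases le_total x 1 with hx1 | hx1
  · linarith [Real.rpow_le_one hx hx1 (by linarith : 0 ≤ 2 - p)]
  · linarith [Real.rpow_le_rpow_of_exponent_le hx1 (by linarith : 2 - p ≤ p)]

lemma add_rpow_two_sub_le (hp : 1 ≤ p) (hp2 : p ≤ 2) {x y : ℝ} (hx : 0 ≤ x) (hy : 0 ≤ y) :
    (x + y) ^ (2 - p) ≤ (1 + x ^ p) + (1 + y ^ p) :=
  (Real.rpow_add_le_add_rpow hx hy (by linarith) (by linarith)).trans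
    (add_le_add (rpow_two_sub_le_one_add_rpow hp hp2 hx) (rpow_two_sub_le_one_add_rpow hp hp2 hy))

end BregmanDivergence

section WeightedNorm

variable {ι : Type*} [Fintype ι] {w : ι → ℝ} {p q : ℝ}

/-- The weighted norm `(∑ i, w i |v i|^p)^{1/p}`; with the cell volumes as weights it is the
discrete `L^p` norm of the scheme. -/
noncomputable def weightedLpNorm (w : ι → ℝ) (p : ℝ) (v : ι → ℝ) : ℝ :=
  (∑ i, w i * |v i| ^ p) ^ (1 / p)

lemma sum_mul_abs_rpow_nonneg (hw : ∀ i, 0 ≤ w i) (p : ℝ) (v : ι → ℝ) :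
    0 ≤ ∑ i, w i * |v i| ^ p :=
  sum_nonneg fun i _ ↦ mul_nonneg (hw i) (by positivity)

lemma weightedLpNorm_nonneg (hw : ∀ i, 0 ≤ w i) (p : ℝ) (v : ι → ℝ) :
    0 ≤ weightedLpNorm w p v :=
  Real.rpow_nonneg (sum_mul_abs_rpow_nonneg hw p v) _

lemma weightedLpNorm_rpow (hw : ∀ i, 0 ≤ w i) (hp : p ≠ 0) (v : ι → ℝ) :
    weightedLpNorm w p v ^ p = ∑ i, w i * |v i| ^ p := by
  rw [weightedLpNorm, one_div, Real.rpow_inv_rpow (sum_mul_abs_rpow_nonneg hw p v) hp]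

lemma abs_rpow_one_div_mul_rpow {c : ℝ} (hc : 0 ≤ c) (hp : p ≠ 0) (x : ℝ) :
    |c ^ (1 / p) * x| ^ p = c * |x| ^ p := by
  have hroot : 0 ≤ c ^ (1 / p) := by positivity
  rw [abs_mul, Real.mul_rpow (abs_nonneg _) (abs_nonneg _), abs_of_nonneg hroot, one_div,
    Real.rpow_inv_rpow hc hp]

lemma weightedLpNorm_eq_sum_abs_rpow (hw : ∀ i, 0 ≤ w i) (hp : p ≠ 0) (v : ι → ℝ) :
    weightedLpNorm w p v = (∑ i, |w i ^ (1 / p) * v i| ^ p) ^ (1 / p) := by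
  simp only [weightedLpNorm, abs_rpow_one_div_mul_rpow (hw _) hp]

lemma weightedLpNorm_add_le (hw : ∀ i, 0 ≤ w i) (hp : 1 ≤ p) (f g : ι → ℝ) :
    weightedLpNorm w p (f + g) ≤ weightedLpNorm w p f + weightedLpNorm w p g := by
  simp only [weightedLpNorm_eq_sum_abs_rpow hw (by linarith : p ≠ 0), Pi.add_apply, mul_add]
  exact Real.Lp_add_le univ _ _ hp

lemma weightedLpNorm_smul (hw : ∀ i, 0 ≤ w i) (hp : p ≠ 0) (c : ℝ) (v : ι → ℝ) :
    weightedLpNorm w p (c • v) = |c| * weightedLpNorm w p v := by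
  have hsum : ∑ i, w i * |(c • v) i| ^ p = |c| ^ p * ∑ i, w i * |v i| ^ p := by
    rw [mul_sum]
    refine sum_congr rfl fun i _ ↦ ?_
    rw [Pi.smul_apply, smul_eq_mul, abs_mul, Real.mul_rpow (abs_nonneg c) (abs_nonneg (v i))]
    ring
  rw [weightedLpNorm, hsum, Real.mul_rpow (by positivity) (sum_mul_abs_rpow_nonneg hw p v),
    one_div, Real.rpow_rpow_inv (abs_nonneg c) hp, weightedLpNorm, one_div]

lemma sum_mul_mul_le_weightedLpNorm_mul (hw : ∀ i, 0 ≤ w i) (hpq : p.HolderConjugate q)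
    (f g : ι → ℝ) :
    ∑ i, w i * (f i * g i) ≤ weightedLpNorm w p f * weightedLpNorm w q g := by
  rw [weightedLpNorm_eq_sum_abs_rpow hw hpq.ne_zero,
    weightedLpNorm_eq_sum_abs_rpow hw hpq.symm.ne_zero]
  refine le_of_eq_of_le (sum_congr rfl fun i _ ↦ ?_) (Real.inner_le_Lp_mul_Lq univ _ _ hpq)
  have hsplit : w i ^ (1 / p) * w i ^ (1 / q) = w i := by
    have hone : 1 / p + 1 / q = 1 := by simpa using hpq.inv_add_inv_eq_one
    rw [← Real.rpow_add' (hw i) (by rw [hone]; exact one_ne_zero), hone, Real.rpow_one]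
  linear_combination -(f i * g i) * hsplit

lemma weightedLpNorm_dualityMap (hw : ∀ i, 0 ≤ w i) (hpq : p.HolderConjugate q) (v : ι → ℝ) :
    weightedLpNorm w q (fun i ↦ dualityMap p (v i)) = weightedLpNorm w p v ^ (p - 1) := by
  have hpow : ∀ i, |dualityMap p (v i)| ^ q = |v i| ^ p := fun i ↦ by
    rw [abs_dualityMap hpq.lt.ne', ← Real.rpow_mul (abs_nonneg _), hpq.sub_one_mul_conj]
  simp only [weightedLpNorm, hpow]
  rw [← Real.rpow_mul (sum_mul_abs_rpow_nonneg hw p v), one_div_mul_eq_div, one_div,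
    ← hpq.one_sub_inv, sub_div, div_self hpq.ne_zero, one_div]

lemma sum_mul_mul_dualityMap_le (hw : ∀ i, 0 ≤ w i) (hp : 1 < p) (f v : ι → ℝ) :
    ∑ i, w i * (f i * dualityMap p (v i)) ≤
      weightedLpNorm w p f * weightedLpNorm w p v ^ (p - 1) := by
  have hpq := Real.HolderConjugate.conjExponent hp
  rw [← weightedLpNorm_dualityMap hw hpq]
  exact sum_mul_mul_le_weightedLpNorm_mul hw hpq f _

lemma weightedLpNorm_le_of_exponent_le (hw : ∀ i, 0 ≤ w i) (hp : 0 < p) (hpq : p ≤ q)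
    (v : ι → ℝ) :
    weightedLpNorm w p v ≤ (∑ i, w i) ^ (1 / p - 1 / q) * weightedLpNorm w q v := by
  have hq : 0 < q := hp.trans_le hpq
  have hsum : 0 ≤ ∑ i, w i := sum_nonneg fun i _ ↦ hw i
  have hholder := Real.inner_le_weight_mul_Lp_of_nonneg univ ((one_le_div hp).2 hpq) w
    (fun i ↦ |v i| ^ p) hw fun i ↦ by positivity
  simp only [← Real.rpow_mul (abs_nonneg _), mul_div_cancel₀ q hp.ne'] at hholder
  calc weightedLpNorm w p v
      ≤ ((∑ i, w i) ^ (1 - (q / p)⁻¹) * (∑ i, w i * |v i| ^ q) ^ (q / p)⁻¹) ^ (1 / p) := by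
        have := sum_mul_abs_rpow_nonneg hw p v
        rw [weightedLpNorm]
        gcongr
    _ = (∑ i, w i) ^ (1 / p - 1 / q) * weightedLpNorm w q v := by
        have hroot := Real.rpow_nonneg (sum_mul_abs_rpow_nonneg hw q v) (q / p)⁻¹
        rw [Real.mul_rpow (by positivity) hroot, ← Real.rpow_mul hsum,
          ← Real.rpow_mul (sum_mul_abs_rpow_nonneg hw q v), weightedLpNorm]
        congr 2 <;> field_simp

end WeightedNorm

section UpwindOperator

variable {ι : Type*} [Fintype ι] {p : ℝ} {a : ι → ι → ℝ} {r : ι → ℝ}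

/-- The net outflow from the cell `K` of a quantity with density `r`, when `a K L` is the rate of
transport from `K` to `L` for every two cells. The diagonal of `a` cancels, and `netOutflow a 1 K`
is the discrete divergence times the volume of `K`. -/
def netOutflow (a : ι → ι → ℝ) (r : ι → ℝ) (K : ι) : ℝ :=
  ∑ L, (a K L * r K - a L K * r L)

/-- The numerical dissipation that the upwind scheme with outflow rates `a` produces when it is
tested against the duality map of `ℓ^p`. -/
noncomputable def dissipation (p : ℝ) (a : ι → ι → ℝ) (r : ι → ℝ) : ℝ :=
  ∑ K, ∑ L, a K L * powBregman p (r K) (r L)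

lemma dissipation_nonneg (hp : 1 < p) (ha : ∀ K L, 0 ≤ a K L) (r : ι → ℝ) :
    0 ≤ dissipation p a r :=
  sum_nonneg fun K _ ↦ sum_nonneg fun L _ ↦ mul_nonneg (ha K L) (powBregman_nonneg hp _ _)

lemma sum_mul_netOutflow (a : ι → ι → ℝ) (g r : ι → ℝ) :
    ∑ K, g K * netOutflow a r K = ∑ K, ∑ L, a K L * ((g K - g L) * r K) := by
  have hswap : ∑ K, ∑ L, g K * (a L K * r L) = ∑ K, ∑ L, g L * (a K L * r K) := sum_comm
  simp only [netOutflow, mul_sum, mul_sub, sum_sub_distrib, hswap]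
  simp only [← sum_sub_distrib]
  refine sum_congr rfl fun K _ ↦ sum_congr rfl fun L _ ↦ ?_
  ring

lemma mul_sum_dualityMap_mul_netOutflow (hp : p ≠ 0) (a : ι → ι → ℝ) (r : ι → ℝ) :
    p * ∑ K, dualityMap p (r K) * netOutflow a r K =
      dissipation p a r + (p - 1) * ∑ K, |r K| ^ p * netOutflow a 1 K := by
  simp only [dissipation, sum_mul_netOutflow a fun K ↦ dualityMap p (r K),
    sum_mul_netOutflow a fun K ↦ |r K| ^ p, mul_sum, ← sum_add_distrib, Pi.one_apply]
  refine sum_congr rfl fun K _ ↦ sum_congr rfl fun L _ ↦ ?_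
  linear_combination a K L * mul_dualityMap_sub_mul hp (r K) (r L)

lemma sum_sum_mul_add (a : ι → ι → ℝ) (g : ι → ℝ) :
    ∑ K, ∑ L, a K L * (g K + g L) = ∑ K, g K * ∑ L, (a K L + a L K) := by
  have hswap : ∑ K, ∑ L, g K * a L K = ∑ K, ∑ L, g L * a K L := sum_comm
  simp only [mul_comm (a _ _), mul_sum, mul_add, add_mul, sum_add_distrib, hswap]

lemma sum_sum_mul_add_rpow_le {w : ι → ℝ} {R : ℝ} (hw : ∀ K, 0 ≤ w K) (hp : 1 ≤ p) (hp2 : p ≤ 2)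
    (ha : ∀ K L, 0 ≤ a K L) (hflow : ∀ K, ∑ L, (a K L + a L K) ≤ R * w K) :
    ∑ K, ∑ L, a K L * (|r K| + |r L|) ^ (2 - p) ≤
      R * (∑ K, w K + weightedLpNorm w p r ^ p) := by
  rw [weightedLpNorm_rpow hw (by linarith)]
  calc ∑ K, ∑ L, a K L * (|r K| + |r L|) ^ (2 - p)
      ≤ ∑ K, ∑ L, a K L * ((1 + |r K| ^ p) + (1 + |r L| ^ p)) := by
        gcongr with K _ L _
        · exact ha K L
        · exact add_rpow_two_sub_le hp hp2 (abs_nonneg _) (abs_nonneg _)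
    _ = ∑ K, (1 + |r K| ^ p) * ∑ L, (a K L + a L K) := sum_sum_mul_add a _
    _ ≤ ∑ K, (1 + |r K| ^ p) * (R * w K) := by
        gcongr with K
        exact hflow K
    _ = R * (∑ K, w K + ∑ K, w K * |r K| ^ p) := by
        rw [← sum_add_distrib, mul_sum]
        exact sum_congr rfl fun K _ ↦ by ring

lemma sq_sum_sum_mul_abs_sub_le (hp : 1 < p) (hp2 : p ≤ 2) (ha : ∀ K L, 0 ≤ a K L) :
    (∑ K, ∑ L, a K L * |r K - r L|) ^ 2 ≤ dissipation p a r *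
      (2 / (p * (p - 1)) * ∑ K, ∑ L, a K L * (|r K| + |r L|) ^ (2 - p)) := by
  have : 0 < p * (p - 1) := mul_pos (by linarith) (by linarith)
  have hpairs (F : ι → ι → ℝ) : ∑ K, ∑ L, F K L = ∑ e : ι × ι, F e.1 e.2 :=
    (Fintype.sum_prod_type' F).symm
  rw [dissipation, hpairs, hpairs, hpairs, mul_sum]
  refine sum_sq_le_sum_mul_sum_of_sq_le_mul univ
    (fun e _ ↦ mul_nonneg (ha _ _) (powBregman_nonneg hp _ _))
    (fun e _ ↦ mul_nonneg (by positivity) (mul_nonneg (ha _ _) (by positivity))) fun e _ ↦ ?_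
  rw [mul_pow, sq_abs]
  calc a e.1 e.2 ^ 2 * (r e.1 - r e.2) ^ 2
      ≤ a e.1 e.2 ^ 2 * (powBregman p (r e.1) (r e.2) *
          (2 / (p * (p - 1)) * (|r e.1| + |r e.2|) ^ (2 - p))) := by
        gcongr
        exact sq_sub_le_powBregman_mul hp hp2 _ _
    _ = _ := by ring

end UpwindOperator

section UpwindStep

variable {ι : Type*} [Fintype ι] {w : ι → ℝ} {p δ lam κ : ℝ} {a : ι → ι → ℝ} {s f r : ι → ℝ}

/-- One step of length `δ` of the implicit upwind scheme from `s` to `r`, with source `f`, cell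
volumes `w` and outflow rates `a`, multiplied by `δ` and the cell volume. -/
def IsUpwindStep (w : ι → ℝ) (a : ι → ι → ℝ) (δ : ℝ) (s f r : ι → ℝ) : Prop :=
  ∀ K, w K * (r K - s K) + δ * netOutflow a r K = δ * (w K * f K)

namespace IsUpwindStep

lemma sum_mul_add_sum_mul_netOutflow (h : IsUpwindStep w a δ s f r) (g : ι → ℝ) :
    ∑ K, w K * (r K * g K) + δ * ∑ K, g K * netOutflow a r K =
      ∑ K, w K * ((s + δ • f) K * g K) := by
  rw [mul_sum, ← sum_add_distrib]
  refine sum_congr rfl fun K _ ↦ ?_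
  rw [Pi.add_apply, Pi.smul_apply, smul_eq_mul]
  linear_combination g K * h K

lemma rpow_add_dissipation_le (h : IsUpwindStep w a δ s f r) (hw : ∀ K, 0 ≤ w K) (hp : 1 < p)
    (hδ : 0 ≤ δ) (hdiv : ∀ K, -(lam * w K) ≤ δ * netOutflow a 1 K) :
    p * weightedLpNorm w p r ^ p + δ * dissipation p a r ≤
      (p - 1) * lam * weightedLpNorm w p r ^ p +
        p * ((weightedLpNorm w p s + δ * weightedLpNorm w p f) *
          weightedLpNorm w p r ^ (p - 1)) := by
  have hp0 : p ≠ 0 := by linarith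
  have htest := h.sum_mul_add_sum_mul_netOutflow fun K ↦ dualityMap p (r K)
  have hflux := mul_sum_dualityMap_mul_netOutflow hp0 a r
  have hnorm : ∑ K, w K * (r K * dualityMap p (r K)) = weightedLpNorm w p r ^ p := by
    simp only [weightedLpNorm_rpow hw hp0, mul_comm (r _), dualityMap_mul_self hp0]
  have hsource : ∑ K, w K * ((s + δ • f) K * dualityMap p (r K)) ≤
      (weightedLpNorm w p s + δ * weightedLpNorm w p f) * weightedLpNorm w p r ^ (p - 1) := by
    refine (sum_mul_mul_dualityMap_le hw hp _ r).trans ?_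
    have htriangle := weightedLpNorm_add_le hw hp.le s (δ • f)
    rw [weightedLpNorm_smul hw hp0, abs_of_nonneg hδ] at htriangle
    have := weightedLpNorm_nonneg hw p r
    gcongr
  have hcompression :
      -(lam * weightedLpNorm w p r ^ p) ≤ δ * ∑ K, |r K| ^ p * netOutflow a 1 K := by
    rw [weightedLpNorm_rpow hw hp0, mul_sum, mul_sum, ← sum_neg_distrib]
    refine sum_le_sum fun K _ ↦ ?_
    linear_combination mul_le_mul_of_nonneg_left (hdiv K) (by positivity : 0 ≤ |r K| ^ p)
  linear_combination p * hsource + (p - 1) * hcompression + p * htest - p * hnorm - δ * hflux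

lemma weightedLpNorm_le (h : IsUpwindStep w a δ s f r) (hw : ∀ K, 0 ≤ w K) (hp : 1 < p)
    (hδ : 0 ≤ δ) (ha : ∀ K L, 0 ≤ a K L) (hlam : 0 ≤ lam)
    (hdiv : ∀ K, -(lam * w K) ≤ δ * netOutflow a 1 K) (hκ : 0 < κ)
    (hlamκ : (p - 1) / p * lam ≤ (κ - 1) / κ) :
    weightedLpNorm w p r ≤
      Real.exp (κ * lam) * (weightedLpNorm w p s + δ * weightedLpNorm w p f) := by
  have hp0 : 0 < p := by linarith
  have hB : 0 ≤ weightedLpNorm w p s + δ * weightedLpNorm w p f :=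
    add_nonneg (weightedLpNorm_nonneg hw p s) (mul_nonneg hδ (weightedLpNorm_nonneg hw p f))
  rcases (weightedLpNorm_nonneg hw p r).eq_or_lt with hr | hr
  · rw [← hr]
    positivity
  have hcontr : (1 - (p - 1) / p * lam) * weightedLpNorm w p r ≤
      weightedLpNorm w p s + δ * weightedLpNorm w p f := by
    have henergy := h.rpow_add_dissipation_le hw hp hδ hdiv
    have hdiss := mul_nonneg hδ (dissipation_nonneg hp ha r)
    rw [← rpow_sub_one_mul_self hp0.ne' hr.le] at henergy
    refine le_of_mul_le_mul_right ?_ (mul_pos hp0 (Real.rpow_pos_of_pos hr (p - 1)))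
    have hcancel : (p - 1) / p * p = p - 1 := div_mul_cancel₀ _ hp0.ne'
    linear_combination henergy + hdiss -
      lam * weightedLpNorm w p r * weightedLpNorm w p r ^ (p - 1) * hcancel
  have hx : 0 ≤ (p - 1) / p * lam := mul_nonneg (div_nonneg (by linarith) hp0.le) hlam
  calc weightedLpNorm w p r
      ≤ Real.exp (κ * ((p - 1) / p * lam)) * (1 - (p - 1) / p * lam) * weightedLpNorm w p r :=
        le_mul_of_one_le_left hr.le (one_le_exp_mul_one_sub hκ hx hlamκ)
    _ ≤ Real.exp (κ * ((p - 1) / p * lam)) *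
          (weightedLpNorm w p s + δ * weightedLpNorm w p f) := by
        rw [mul_assoc]
        gcongr
    _ ≤ Real.exp (κ * lam) * (weightedLpNorm w p s + δ * weightedLpNorm w p f) := by
        gcongr
        exact mul_le_of_le_one_left hlam ((div_le_one hp0).2 (by linarith))

lemma mul_dissipation_le {M : ℝ} (h : IsUpwindStep w a δ s f r) (hw : ∀ K, 0 ≤ w K) (hp : 1 < p)
    (hδ : 0 ≤ δ) (hlam : 0 ≤ lam) (hdiv : ∀ K, -(lam * w K) ≤ δ * netOutflow a 1 K)
    (hM : weightedLpNorm w p r ≤ M) :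
    δ * dissipation p a r ≤ weightedLpNorm w p s ^ p - weightedLpNorm w p r ^ p +
      (p - 1) * lam * M ^ p + p * M ^ (p - 1) * (δ * weightedLpNorm w p f) := by
  have hr := weightedLpNorm_nonneg hw p r
  have hf := weightedLpNorm_nonneg hw p f
  have : 0 ≤ p - 1 := by linarith
  have hyoung := mul_mul_rpow_sub_one_le hp (weightedLpNorm_nonneg hw p s) hr
  have hcompression : (p - 1) * lam * weightedLpNorm w p r ^ p ≤ (p - 1) * lam * M ^ p := by
    gcongr
  have hsource : p * weightedLpNorm w p r ^ (p - 1) * (δ * weightedLpNorm w p f) ≤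
      p * M ^ (p - 1) * (δ * weightedLpNorm w p f) := by
    gcongr
  linear_combination h.rpow_add_dissipation_le hw hp hδ hdiv + hyoung + hcompression + hsource

end IsUpwindStep

end UpwindStep

section UpwindEvolution

variable {ι : Type*} [Fintype ι] {w : ι → ℝ} {p δ κ M R : ℝ} {a : ℕ → ι → ι → ℝ} {lam : ℕ → ℝ}
  {ρ f : ℕ → ι → ℝ} {N : ℕ}

lemma weightedLpNorm_le_of_isUpwindStep (hw : ∀ K, 0 ≤ w K) (hp : 1 < p) (hδ : 0 ≤ δ)
    (ha : ∀ n K L, 0 ≤ a n K L) (hlam : ∀ n, 0 ≤ lam n)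
    (hdiv : ∀ n K, -(lam n * w K) ≤ δ * netOutflow (a n) 1 K) (hκ : 0 < κ)
    (hlamκ : ∀ n < N, (p - 1) / p * lam n ≤ (κ - 1) / κ)
    (hstep : ∀ n < N, IsUpwindStep w (a n) δ (ρ n) (f n) (ρ (n + 1))) :
    ∀ n ≤ N, weightedLpNorm w p (ρ n) ≤ Real.exp (κ * ∑ m ∈ range N, lam m) *
      (weightedLpNorm w p (ρ 0) + ∑ m ∈ range N, δ * weightedLpNorm w p (f m)) := by
  intro n hn
  have hf : ∀ m, 0 ≤ δ * weightedLpNorm w p (f m) := fun m ↦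
    mul_nonneg hδ (weightedLpNorm_nonneg hw p (f m))
  have hbound := le_exp_sum_mul_add_sum (x := fun n ↦ weightedLpNorm w p (ρ n))
    (c := fun n ↦ κ * lam n) (fun m ↦ mul_nonneg hκ.le (hlam m)) hf
    (fun m hm ↦ (hstep m hm).weightedLpNorm_le hw hp hδ (ha m) (hlam m) (hdiv m) hκ (hlamκ m hm))
    n hn
  have hlam_mono : ∑ m ∈ range n, lam m ≤ ∑ m ∈ range N, lam m :=
    sum_le_sum_of_subset_of_nonneg (range_subset_range.2 hn) fun m _ _ ↦ hlam m
  have hf_mono : ∑ m ∈ range n, δ * weightedLpNorm w p (f m) ≤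
      ∑ m ∈ range N, δ * weightedLpNorm w p (f m) :=
    sum_le_sum_of_subset_of_nonneg (range_subset_range.2 hn) fun m _ _ ↦ hf m
  have hdata := add_nonneg (weightedLpNorm_nonneg hw p (ρ 0))
    (sum_nonneg fun m (_ : m ∈ range n) ↦ hf m)
  rw [← mul_sum] at hbound
  refine hbound.trans ?_
  gcongr

lemma mul_sum_dissipation_le (hw : ∀ K, 0 ≤ w K) (hp : 1 < p) (hδ : 0 ≤ δ)
    (hlam : ∀ n, 0 ≤ lam n) (hdiv : ∀ n K, -(lam n * w K) ≤ δ * netOutflow (a n) 1 K)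
    (hstep : ∀ n < N, IsUpwindStep w (a n) δ (ρ n) (f n) (ρ (n + 1)))
    (hM : ∀ n ≤ N, weightedLpNorm w p (ρ n) ≤ M)
    (hfM : ∑ n ∈ range N, δ * weightedLpNorm w p (f n) ≤ M) :
    δ * ∑ n ∈ range N, dissipation p (a n) (ρ (n + 1)) ≤
      (p + 1 + (p - 1) * ∑ n ∈ range N, lam n) * M ^ p := by
  have hM0 : 0 ≤ M := (weightedLpNorm_nonneg hw p _).trans (hM 0 N.zero_le)
  have hinitial : weightedLpNorm w p (ρ 0) ^ p ≤ M ^ p :=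
    Real.rpow_le_rpow (weightedLpNorm_nonneg hw p _) (hM 0 N.zero_le) (by linarith)
  have hfinal : 0 ≤ weightedLpNorm w p (ρ N) ^ p :=
    Real.rpow_nonneg (weightedLpNorm_nonneg hw p _) p
  have hsource : p * M ^ (p - 1) * ∑ n ∈ range N, δ * weightedLpNorm w p (f n) ≤ p * M ^ p := by
    rw [← rpow_sub_one_mul_self (by linarith : p ≠ 0) hM0, ← mul_assoc]
    gcongr
  have hsum := sum_le_sum fun n (hn : n ∈ range N) ↦
    (hstep n (mem_range.1 hn)).mul_dissipation_le hw hp hδ (hlam n) (hdiv n)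
      (hM (n + 1) (mem_range.1 hn))
  simp only [sum_add_distrib, ← mul_sum, ← sum_mul,
    sum_range_sub' fun n ↦ weightedLpNorm w p (ρ n) ^ p] at hsum hsource
  linear_combination hsum + hinitial + hfinal + hsource

lemma mul_sum_mul_abs_sub_le_sqrt (hw : ∀ K, 0 ≤ w K) (hp : 1 < p) (hp2 : p ≤ 2) (hδ : 0 ≤ δ)
    (ha : ∀ n K L, 0 ≤ a n K L) (hR : 0 ≤ R)
    (hflow : ∀ n K, ∑ L, (a n K L + a n L K) ≤ R * w K) (hlam : ∀ n, 0 ≤ lam n)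
    (hdiv : ∀ n K, -(lam n * w K) ≤ δ * netOutflow (a n) 1 K)
    (hstep : ∀ n < N, IsUpwindStep w (a n) δ (ρ n) (f n) (ρ (n + 1)))
    (hM : ∀ n ≤ N, weightedLpNorm w p (ρ n) ≤ M)
    (hfM : ∑ n ∈ range N, δ * weightedLpNorm w p (f n) ≤ M) :
    δ * ∑ n ∈ range N, ∑ K, ∑ L, a n K L * |ρ (n + 1) K - ρ (n + 1) L| ≤
      √((p + 1 + (p - 1) * ∑ n ∈ range N, lam n) * M ^ p *
        (N * δ * (2 / (p * (p - 1)) * (R * (∑ K, w K + M ^ p))))) := by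
  have : 0 < p * (p - 1) := mul_pos (by linarith) (by linarith)
  have hM0 : 0 ≤ M := (weightedLpNorm_nonneg hw p _).trans (hM 0 N.zero_le)
  have hsum_w : 0 ≤ ∑ K, w K := sum_nonneg fun K _ ↦ hw K
  set B := 2 / (p * (p - 1)) * (R * (∑ K, w K + M ^ p)) with hB
  have hB0 : 0 ≤ B := by positivity
  have hdiss : ∀ n, 0 ≤ dissipation p (a n) (ρ (n + 1)) := fun n ↦
    dissipation_nonneg hp (ha n) _
  have hspace : ∀ n ∈ range N, (∑ K, ∑ L, a n K L * |ρ (n + 1) K - ρ (n + 1) L|) ^ 2 ≤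
      dissipation p (a n) (ρ (n + 1)) * B := fun n hn ↦ by
    refine (sq_sum_sum_mul_abs_sub_le hp hp2 (ha n)).trans
      (mul_le_mul_of_nonneg_left ?_ (hdiss n))
    have hρ := weightedLpNorm_nonneg hw p (ρ (n + 1))
    rw [hB]
    gcongr
    refine (sum_sum_mul_add_rpow_le hw hp.le hp2 (ha n) (hflow n)).trans ?_
    gcongr
    exact hM (n + 1) (mem_range.1 hn)
  have htime := sum_sq_le_sum_mul_sum_of_sq_le_mul (range N) (fun n _ ↦ hdiss n)
    (fun _ _ ↦ hB0) hspace
  rw [sum_const, card_range, nsmul_eq_mul] at htime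
  refine Real.le_sqrt_of_sq_le ?_
  calc (δ * ∑ n ∈ range N, ∑ K, ∑ L, a n K L * |ρ (n + 1) K - ρ (n + 1) L|) ^ 2
      ≤ δ ^ 2 * ((∑ n ∈ range N, dissipation p (a n) (ρ (n + 1))) * (N * B)) := by
        rw [mul_pow]
        gcongr
    _ = δ * (∑ n ∈ range N, dissipation p (a n) (ρ (n + 1))) * (N * δ * B) := by ring
    _ ≤ _ := mul_le_mul_of_nonneg_right (mul_sum_dissipation_le hw hp hδ hlam hdiv hstep hM hfM)
        (by positivity)

end UpwindEvolution

section UpwindFluxes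

variable {ι : Type*} {edge u : ι → ι → ℝ}

/-- The rate `|K∣L| u⁺_{KL}` at which the upwind scheme carries mass from `K` to `L`. -/
def outflowRate (edge u : ι → ι → ℝ) (K L : ι) : ℝ := edge K L * max (u K L) 0

lemma outflowRate_nonneg (hedge : ∀ K L, 0 ≤ edge K L) (u : ι → ι → ℝ) (K L : ι) :
    0 ≤ outflowRate edge u K L :=
  mul_nonneg (hedge K L) (le_max_right _ _)

lemma outflowRate_swap (hsymm : ∀ K L, edge K L = edge L K) (hanti : ∀ K L, u K L = -u L K)
    (K L : ι) : outflowRate edge u L K = edge K L * max (-u K L) 0 := by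
  rw [outflowRate, hsymm L K, hanti L K]

lemma outflowRate_sub_swap (hsymm : ∀ K L, edge K L = edge L K) (hanti : ∀ K L, u K L = -u L K)
    (K L : ι) : outflowRate edge u K L - outflowRate edge u L K = edge K L * u K L := by
  rw [outflowRate_swap hsymm hanti K L, outflowRate, ← mul_sub, max_zero_sub_max_neg_zero_eq_self]

lemma outflowRate_add_swap (hsymm : ∀ K L, edge K L = edge L K) (hanti : ∀ K L, u K L = -u L K)
    (K L : ι) : outflowRate edge u K L + outflowRate edge u L K = edge K L * |u K L| := by
  rw [outflowRate_swap hsymm hanti K L, outflowRate, ← mul_add,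
    max_zero_add_max_neg_zero_eq_abs_self]

variable [Fintype ι] [DecidableEq ι] {vol : ι → ℝ} {δ : ℝ}

lemma isUpwindStep_outflowRate {s f r : ι → ℝ} (hvol : ∀ K, vol K ≠ 0) (hδ : δ ≠ 0)
    (hsymm : ∀ K L, edge K L = edge L K) (hanti : ∀ K L, u K L = -u L K)
    (hscheme : ∀ K, (r K - s K) / δ + ∑ L ∈ univ.erase K, edge K L / vol K *
      (max (u K L) 0 * r K - max (-u K L) 0 * r L) = f K) :
    IsUpwindStep vol (outflowRate edge u) δ s f r := by
  intro K
  have hK := hvol K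
  have hflux : ∑ L ∈ univ.erase K, edge K L / vol K *
      (max (u K L) 0 * r K - max (-u K L) 0 * r L) =
        netOutflow (outflowRate edge u) r K / vol K := by
    rw [netOutflow, sum_div, ← sum_erase univ (a := K) (by ring)]
    refine sum_congr rfl fun L _ ↦ ?_
    rw [outflowRate_swap hsymm hanti K L, outflowRate]
    ring
  rw [← hscheme K, hflux]
  field_simp

lemma netOutflow_outflowRate_one (hsymm : ∀ K L, edge K L = edge L K)
    (hanti : ∀ K L, u K L = -u L K) (K : ι) :
    netOutflow (outflowRate edge u) 1 K = ∑ L ∈ univ.erase K, edge K L * u K L := by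
  have hdiag : edge K K * u K K = 0 := by rw [← outflowRate_sub_swap hsymm hanti, sub_self]
  simp only [netOutflow, Pi.one_apply, mul_one, outflowRate_sub_swap hsymm hanti]
  exact (sum_erase univ (f := fun L ↦ edge K L * u K L) hdiag).symm

lemma sum_outflowRate_add_swap_le {U C₀ h : ℝ} (hedge : ∀ K L, 0 ≤ edge K L)
    (hsymm : ∀ K L, edge K L = edge L K) (hanti : ∀ K L, u K L = -u L K)
    (huU : ∀ K L, |u K L| ≤ U) (hmesh : ∀ K, ∑ L ∈ univ.erase K, edge K L ≤ C₀ * vol K / h)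
    (K : ι) : ∑ L, (outflowRate edge u K L + outflowRate edge u L K) ≤ C₀ * U / h * vol K := by
  have hdiag : edge K K * |u K K| = 0 := by
    rw [self_eq_neg.1 (hanti K K), abs_zero, mul_zero]
  calc ∑ L, (outflowRate edge u K L + outflowRate edge u L K)
      = ∑ L ∈ univ.erase K, edge K L * |u K L| := by
        simp only [outflowRate_add_swap hsymm hanti]
        exact (sum_erase univ (f := fun L ↦ edge K L * |u K L|) hdiag).symm
    _ ≤ ∑ L ∈ univ.erase K, edge K L * U := by
        gcongr with L
        · exact hedge K L
        · exact huU K L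
    _ ≤ C₀ * vol K / h * U := by
        have hU : 0 ≤ U := (abs_nonneg (u K K)).trans (huU K K)
        rw [← sum_mul]
        gcongr
        exact hmesh K
    _ = C₀ * U / h * vol K := by ring

lemma sum_sum_erase_mul_abs_sub (hsymm : ∀ K L, edge K L = edge L K)
    (hanti : ∀ K L, u K L = -u L K) (r : ι → ℝ) :
    ∑ K, ∑ L ∈ univ.erase K, edge K L * |u K L| * |r K - r L| =
      2 * ∑ K, ∑ L, outflowRate edge u K L * |r K - r L| := by
  have hswap : ∑ K, ∑ L, outflowRate edge u L K * |r K - r L| =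
      ∑ K, ∑ L, outflowRate edge u K L * |r K - r L| := by
    rw [sum_comm]
    simp only [abs_sub_comm]
  calc ∑ K, ∑ L ∈ univ.erase K, edge K L * |u K L| * |r K - r L|
      = ∑ K, ∑ L, (outflowRate edge u K L + outflowRate edge u L K) * |r K - r L| := by
        simp only [outflowRate_add_swap hsymm hanti]
        exact sum_congr rfl fun K _ ↦ sum_erase _ (by simp)
    _ = 2 * ∑ K, ∑ L, outflowRate edge u K L * |r K - r L| := by
        simp only [add_mul, sum_add_distrib, hswap, two_mul]

variable [Nonempty ι]

/-- The number `max_K ((div u)_K)⁻`, which measures the compression of the flow. -/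
noncomputable def maxNegDiv (vol : ι → ℝ) (edge u : ι → ι → ℝ) : ℝ :=
  univ.sup' univ_nonempty
    fun K ↦ max (-((∑ L ∈ univ.erase K, edge K L * u K L) / vol K)) 0

lemma maxNegDiv_nonneg (vol : ι → ℝ) (edge u : ι → ι → ℝ) : 0 ≤ maxNegDiv vol edge u :=
  le_sup'_of_le _ (mem_univ (Classical.arbitrary ι)) (le_max_right _ _)

lemma neg_mul_maxNegDiv_mul_le (hδ : 0 ≤ δ) (hvol : ∀ K, 0 < vol K)
    (hsymm : ∀ K L, edge K L = edge L K) (hanti : ∀ K L, u K L = -u L K) (K : ι) :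
    -(δ * maxNegDiv vol edge u * vol K) ≤ δ * netOutflow (outflowRate edge u) 1 K := by
  rw [mul_assoc, ← mul_neg]
  refine mul_le_mul_of_nonneg_left ?_ hδ
  rw [netOutflow_outflowRate_one hsymm hanti, ← neg_mul, ← le_div_iff₀ (hvol K), neg_le]
  exact le_sup'_of_le _ (mem_univ K) (le_max_left _ _)

end UpwindFluxes

section WeakBV

variable {ι : Type*} [Fintype ι] {w : ι → ℝ} {p q ℓ : ℝ}

/-- The bound on the `ℓ^p` norms of the discrete solution and of the accumulated source, `p ≤ q`,
obtained from `ℓ^q` stability on a domain of volume `V`, where `A` and `B` are the `ℓ^q` norms of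
the initial value and of the source. -/
noncomputable def stabilityBound (p q κ Λ V A B : ℝ) : ℝ :=
  V ^ (1 / p - 1 / q) * (Λ ^ κ * (A + B))

/-- The constant of the weak BV estimate when the `ℓ^p` norms of the discrete solution and of the
accumulated source are at most `M`. -/
noncomputable def weakBVConstant (p Λ C₀ V M : ℝ) : ℝ :=
  2 * √((p + 1 + (p - 1) * Real.log Λ) * M ^ p * (2 / (p * (p - 1)) * (C₀ * (V + M ^ p))))

lemma weightedLpNorm_le_stabilityBound {κ A B : ℝ} {v : ι → ℝ} (hw : ∀ K, 0 ≤ w K) (hp : 0 < p)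
    (hpq : p ≤ q) (hv : weightedLpNorm w q v ≤ Real.exp (κ * ℓ) * (A + B)) :
    weightedLpNorm w p v ≤ stabilityBound p q κ (Real.exp ℓ) (∑ K, w K) A B := by
  have hV : 0 ≤ ∑ K, w K := sum_nonneg fun K _ ↦ hw K
  rw [stabilityBound, ← Real.exp_mul, mul_comm ℓ]
  exact (weightedLpNorm_le_of_exponent_le hw hp hpq v).trans (by gcongr)

lemma sum_mul_weightedLpNorm_le_stabilityBound {κ δ A : ℝ} {f : ℕ → ι → ℝ} {N : ℕ}
    (hw : ∀ K, 0 ≤ w K) (hp : 0 < p) (hpq : p ≤ q) (hδ : 0 ≤ δ) (hκ : 0 ≤ κ) (hℓ : 0 ≤ ℓ)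
    (hA : 0 ≤ A) :
    ∑ n ∈ range N, δ * weightedLpNorm w p (f n) ≤
      stabilityBound p q κ (Real.exp ℓ) (∑ K, w K) A
        (∑ n ∈ range N, δ * weightedLpNorm w q (f n)) := by
  have hV : 0 ≤ ∑ K, w K := sum_nonneg fun K _ ↦ hw K
  have hB : 0 ≤ ∑ n ∈ range N, δ * weightedLpNorm w q (f n) :=
    sum_nonneg fun n _ ↦ mul_nonneg hδ (weightedLpNorm_nonneg hw q (f n))
  have hgrowth : 1 ≤ Real.exp ℓ ^ κ := Real.one_le_rpow (Real.one_le_exp hℓ) hκ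
  calc ∑ n ∈ range N, δ * weightedLpNorm w p (f n)
      ≤ ∑ n ∈ range N, δ * ((∑ K, w K) ^ (1 / p - 1 / q) * weightedLpNorm w q (f n)) := by
        gcongr with n
        exact weightedLpNorm_le_of_exponent_le hw hp hpq (f n)
    _ = (∑ K, w K) ^ (1 / p - 1 / q) * ∑ n ∈ range N, δ * weightedLpNorm w q (f n) := by
        rw [mul_sum]
        exact sum_congr rfl fun n _ ↦ mul_left_comm _ _ _
    _ ≤ _ := by
        rw [stabilityBound]
        gcongr
        exact (le_add_of_nonneg_left hA).trans (le_mul_of_one_le_left (add_nonneg hA hB) hgrowth)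

lemma two_mul_sqrt_eq_weakBVConstant_mul_sqrt {p ℓ C₀ V M T U h : ℝ} (hTU : 0 ≤ T * U / h) :
    2 * √((p + 1 + (p - 1) * ℓ) * M ^ p *
        (T * (2 / (p * (p - 1)) * (C₀ * U / h * (V + M ^ p))))) =
      weakBVConstant p (Real.exp ℓ) C₀ V M * √(T * U / h) := by
  rw [weakBVConstant, Real.log_exp, mul_assoc 2, ← Real.sqrt_mul' _ hTU]
  congr 2
  ring

lemma two_mul_sum_mul_abs_sub_le_weakBVConstant_mul_sqrt {κ δ C₀ U h : ℝ} {a : ℕ → ι → ι → ℝ}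
    {lam : ℕ → ℝ} {ρ f : ℕ → ι → ℝ} {N : ℕ} (hw : ∀ K, 0 ≤ w K) (hq : 1 < q) (hκ : 0 < κ)
    (hδ : 0 ≤ δ) (hC₀ : 0 ≤ C₀) (hU : 0 ≤ U) (hh : 0 ≤ h) (ha : ∀ n K L, 0 ≤ a n K L)
    (hflow : ∀ n K, ∑ L, (a n K L + a n L K) ≤ C₀ * U / h * w K) (hlam : ∀ n, 0 ≤ lam n)
    (hdiv : ∀ n K, -(lam n * w K) ≤ δ * netOutflow (a n) 1 K)
    (hlamκ : ∀ n < N, (q - 1) / q * lam n ≤ (κ - 1) / κ)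
    (hstep : ∀ n < N, IsUpwindStep w (a n) δ (ρ n) (f n) (ρ (n + 1))) :
    2 * (δ * ∑ n ∈ range N, ∑ K, ∑ L, a n K L * |ρ (n + 1) K - ρ (n + 1) L|) ≤
      weakBVConstant (min q 2) (Real.exp (∑ n ∈ range N, lam n)) C₀ (∑ K, w K)
          (stabilityBound (min q 2) q κ (Real.exp (∑ n ∈ range N, lam n)) (∑ K, w K)
            (weightedLpNorm w q (ρ 0)) (∑ n ∈ range N, δ * weightedLpNorm w q (f n))) *
        √(N * δ * U / h) := by
  have hp : 1 < min q 2 := lt_min hq one_lt_two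
  have hp0 : 0 < min q 2 := one_pos.trans hp
  have hstable := weightedLpNorm_le_of_isUpwindStep hw hq hδ ha hlam hdiv hκ hlamκ hstep
  have hρ := fun n hn ↦
    weightedLpNorm_le_stabilityBound hw hp0 (min_le_left q 2) (hstable n hn)
  have hΛ : 0 ≤ ∑ n ∈ range N, lam n := sum_nonneg fun n _ ↦ hlam n
  have hf := sum_mul_weightedLpNorm_le_stabilityBound (N := N) (f := f) hw hp0 (min_le_left q 2)
    hδ hκ.le hΛ (weightedLpNorm_nonneg hw q (ρ 0))
  rw [← two_mul_sqrt_eq_weakBVConstant_mul_sqrt (by positivity)]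
  gcongr
  exact mul_sum_mul_abs_sub_le_sqrt hw hp (min_le_right q 2) hδ ha (by positivity) hflow hlam hdiv
    hstep hρ hf

end WeakBV

/-- **Spatial weak BV estimate for the implicit upwind scheme.**
For `q ∈ (1,∞)` and `κ > 1` there is a constant `C` — a function of `Λ`, `C₀`,
`∑_K |K|`, `‖ρ⁰‖_{ℓ^q}` and `∑ₙ δ‖fⁿ‖_{ℓ^q}` only — such that, in any discrete upwind
setting with `N` time steps, time step `δ > 0`, mesh size `h > 0`, flux bound
`|uⁿ_{KL}| ≤ U`, mesh regularity `∑_{L≠K} |K∣L| ≤ C₀ |K|/h`,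
`λⁿ := δ · max_K ((div uⁿ)_K)⁻` with `((q−1)/q) λⁿ ≤ (κ−1)/κ` for all `n < N`, and
arbitrary data, one has
`δ ∑ₙ ∑_K ∑_{L≠K} |K∣L| |uⁿ_{KL}| |ρⁿ⁺¹_K − ρⁿ⁺¹_L| ≤ C √(T U / h)` with `T := N δ`. -/
theorem upwind_spatial_weak_BV (q κ : ℝ) (hq : 1 < q) (hκ : 1 < κ) :
    ∃ C : ℝ → ℝ → ℝ → ℝ → ℝ → ℝ,
      ∀ (ι : Type) [Fintype ι] [Nonempty ι] [DecidableEq ι]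
        (vol : ι → ℝ), (∀ K, 0 < vol K) →
      ∀ (edge : ι → ι → ℝ), (∀ K L, edge K L = edge L K) → (∀ K L, 0 ≤ edge K L) →
      ∀ (u : ℕ → ι → ι → ℝ), (∀ n K L, u n K L = - u n L K) →
        (∀ n K L, edge K L = 0 → u n K L = 0) →
      ∀ (δ h U C₀ : ℝ), 0 < δ → 0 < h → 0 < U → 0 < C₀ →
        (∀ n K L, |u n K L| ≤ U) →
        (∀ K, ∑ L ∈ univ.erase K, edge K L ≤ C₀ * vol K / h) →
      ∀ (N : ℕ) (ρ f : ℕ → ι → ℝ),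
        (∀ n < N, ∀ K : ι,
          (ρ (n+1) K - ρ n K) / δ +
            ∑ L ∈ univ.erase K, edge K L / vol K *
              (max (u n K L) 0 * ρ (n+1) K - max (-u n K L) 0 * ρ (n+1) L) = f n K) →
      ∀ (lam : ℕ → ℝ),
        (∀ n, lam n = δ * univ.sup' univ_nonempty
          (fun K => max (-((∑ L ∈ univ.erase K, edge K L * u n K L) / vol K)) 0)) →
        (∀ n < N, (q - 1)/q * lam n ≤ (κ - 1)/κ) →
      δ * ∑ n ∈ Finset.range N, ∑ K, ∑ L ∈ univ.erase K,
          edge K L * |u n K L| * |ρ (n+1) K - ρ (n+1) L| ≤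
        C (Real.exp (∑ n ∈ Finset.range N, lam n)) C₀ (∑ K, vol K)
            ((∑ K, vol K * |ρ 0 K| ^ q) ^ (1/q))
            (∑ n ∈ Finset.range N, δ * (∑ K, vol K * |f n K| ^ q) ^ (1/q)) *
          Real.sqrt ((N * δ) * U / h) := by
  refine ⟨fun Λ C₀ V A B ↦ weakBVConstant (min q 2) Λ C₀ V
    (stabilityBound (min q 2) q κ Λ V A B), ?_⟩
  intro ι _ _ _ vol hvol edge hsymm hedge u hanti _ δ h U C₀ hδ hh hU hC₀ huU hmesh N ρ f hscheme
    lam hlam hlamκ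
  have hlam0 : ∀ n, 0 ≤ lam n := fun n ↦
    hlam n ▸ mul_nonneg hδ.le (maxNegDiv_nonneg vol edge (u n))
  have hdiv : ∀ n K, -(lam n * vol K) ≤ δ * netOutflow (outflowRate edge (u n)) 1 K := fun n K ↦
    hlam n ▸ neg_mul_maxNegDiv_mul_le hδ.le hvol hsymm (hanti n) K
  have hstep := fun n hn ↦
    isUpwindStep_outflowRate (fun K ↦ (hvol K).ne') hδ.ne' hsymm (hanti n) (hscheme n hn)
  calc _ = 2 * (δ * _) := by
        simp only [sum_sum_erase_mul_abs_sub hsymm (hanti _), ← mul_sum, mul_left_comm δ 2]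
    _ ≤ _ := two_mul_sum_mul_abs_sub_le_weakBVConstant_mul_sqrt (fun K ↦ (hvol K).le) hq
      (one_pos.trans hκ) hδ.le hC₀.le hU.le hh.le (fun n ↦ outflowRate_nonneg hedge (u n))
      (fun n ↦ sum_outflowRate_add_swap_le hedge hsymm (hanti n) (huU n) hmesh)
      hlam0 hdiv hlamκ hstep
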